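/- Let M ⊆ ℝ² be the convex hull of a finite set of points, with nonempty interior (a convex polygon). Suppose that for every extreme point v of M there exists a point v' ∈ M with v' ≠ v such that the segment [v, v'] is parallel to one of the two coordinate axes. Then M is orthogonally connected. -/

import Mathlib

noncomputable section

/-- A set `S ⊆ ℝⁿ` is *orthogonally connected* if any two of its points can be joined
by a polygonal path inside `S` all of whose segments are parallel to coordinate axes. -/
def OrthoConn {n : ℕ} (S : Set (EuclideanSpace ℝ (Fin n))) : Prop :=
  ∀ p ∈ S, ∀ q ∈ S, ∃ (k : ℕ) (x : ℕ → EuclideanSpace ℝ (Fin n)),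
    x 0 = p ∧ x k = q ∧ ∀ j < k,
      segment ℝ (x j) (x (j + 1)) ⊆ S ∧
      ∃ (i : Fin n) (c : ℝ), x (j + 1) - x j = c • EuclideanSpace.single i 1

/-!
Any two points of an open connected set are joined by an axis-parallel path, so it suffices to
reach the interior of `M` from every point of `M`. Let `p` be a relative interior point of a
segment `[a, b] ⊆ M` and let `o` be an interior point of `M`. Since `b - a ≠ 0` spans the plane
together with one of the axes, some `α • (b - a) + (o - p)` is parallel to that axis, and moving
from `p` a little in this direction leads into the interior: first slide along `[a, b]`, then
move towards `o`. A point of `M` that is not extreme lies inside such a segment, and an extreme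
point first moves to the midpoint of its axis-parallel segment.
-/

open Topology

section Convexity

variable {𝕜 E : Type*} [Field 𝕜] [LinearOrder 𝕜] [IsStrictOrderedRing 𝕜]
  [AddCommGroup E] [Module 𝕜 E]

theorem exists_mem_openSegment_of_notMem_extremePoints {A : Set E} {p : E} (hp : p ∈ A)
    (hext : p ∉ A.extremePoints 𝕜) :
    ∃ a ∈ A, ∃ b ∈ A, a ≠ b ∧ p ∈ openSegment 𝕜 a b := by
  by_contra! hconst
  refine hext ⟨hp, fun a ha b hb hpab ↦ ?_⟩
  by_cases hab : a = b
  · subst hab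
    rw [openSegment_same] at hpab
    exact hpab.symm
  · exact absurd hpab (hconst a ha b hb hab)

theorem eventually_add_smul_sub_mem_openSegment [TopologicalSpace 𝕜] [OrderTopology 𝕜]
    {a b p : E} (hp : p ∈ openSegment 𝕜 a b) :
    ∀ᶠ t in 𝓝 (0 : 𝕜), p + t • (b - a) ∈ openSegment 𝕜 a b := by
  rw [openSegment_eq_image_lineMap] at hp ⊢
  obtain ⟨θ, hθ, rfl⟩ := hp
  have hθt : ∀ᶠ t in 𝓝 (0 : 𝕜), θ + t ∈ Set.Ioo (0 : 𝕜) 1 := by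
    refine (continuous_const_add θ).continuousAt.eventually_mem ?_
    simpa only [add_zero] using Ioo_mem_nhds hθ.1 hθ.2
  filter_upwards [hθt] with t ht
  refine ⟨θ + t, ht, ?_⟩
  simp only [AffineMap.lineMap_apply_module']
  module

theorem exists_add_smul_mem_interior [TopologicalSpace E] [IsTopologicalAddGroup E]
    [ContinuousConstSMul 𝕜 E] {S : Set E} (hS : Convex 𝕜 S) {p w o : E} {s : 𝕜} (hs : 0 < s)
    (hw : p + s • w ∈ S) (ho : o ∈ interior S) :
    ∃ r : 𝕜, p + r • (w + (o - p)) ∈ interior S := by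
  refine ⟨s / (1 + s), hS.openSegment_self_interior_subset_interior hw ho
    ⟨1 / (1 + s), s / (1 + s), by positivity, by positivity, by field_simp, ?_⟩⟩
  match_scalars <;> field_simp
  ring

end Convexity

theorem exists_smul_add_eq_smul_single {d : EuclideanSpace ℝ (Fin 2)} (hd : d ≠ 0)
    (u : EuclideanSpace ℝ (Fin 2)) :
    ∃ (α : ℝ) (i : Fin 2) (c : ℝ), α • d + u = c • EuclideanSpace.single i 1 := by
  have eliminate (i j : Fin 2) (hij : i ≠ j) (hdj : d j ≠ 0) :
      ∃ c : ℝ, (-u j / d j) • d + u = c • EuclideanSpace.single i 1 := by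
    refine ⟨-u j / d j * d i + u i, ?_⟩
    ext k
    obtain rfl | rfl : k = i ∨ k = j := by omega
    · simp
    · simp [hij.symm, hdj]
  by_cases hd0 : d 0 = 0
  · have hd1 : d 1 ≠ 0 := fun hd1 ↦ hd (by ext k; fin_cases k <;> simp [hd0, hd1])
    exact ⟨_, 0, eliminate 0 1 (by decide) hd1⟩
  · exact ⟨_, 1, eliminate 1 0 (by decide) hd0⟩

section AxisPaths

variable {n : ℕ} {S T : Set (EuclideanSpace ℝ (Fin n))} {x y : EuclideanSpace ℝ (Fin n)}

/-- `y` is reached from `x` by one (possibly degenerate) axis-parallel segment inside `S`: the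
condition imposed on consecutive points in `OrthoConn`. -/
def AxisStep (S : Set (EuclideanSpace ℝ (Fin n))) (x y : EuclideanSpace ℝ (Fin n)) : Prop :=
  segment ℝ x y ⊆ S ∧ ∃ (i : Fin n) (c : ℝ), y - x = c • EuclideanSpace.single i 1

/-- `y` is reached from `x` by a path of axis-parallel segments inside `S`. The trivial path is
allowed for every `x`, also outside `S`. -/
abbrev AxisJoined (S : Set (EuclideanSpace ℝ (Fin n))) :
    EuclideanSpace ℝ (Fin n) → EuclideanSpace ℝ (Fin n) → Prop :=
  Relation.ReflTransGen (AxisStep S)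

theorem AxisStep.of_convex (hS : Convex ℝ S) (hx : x ∈ S) (hy : y ∈ S) {i : Fin n} {c : ℝ}
    (hxy : y - x = c • EuclideanSpace.single i 1) : AxisStep S x y :=
  ⟨hS.segment_subset hx hy, i, c, hxy⟩

theorem AxisStep.mono (hST : S ⊆ T) (h : AxisStep S x y) : AxisStep T x y :=
  ⟨h.1.trans hST, h.2⟩

instance AxisStep.stdSymm : Std.Symm (AxisStep S) where
  symm x y := by
    rintro ⟨hseg, i, c, hxy⟩
    refine ⟨segment_symm ℝ x y ▸ hseg, i, -c, ?_⟩
    rw [neg_smul, ← hxy, neg_sub]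

theorem AxisStep.midpoint (h : AxisStep S x y) : AxisStep S x (midpoint ℝ x y) := by
  obtain ⟨hseg, i, c, hxy⟩ := h
  refine ⟨((convex_segment x y).segment_subset (left_mem_segment ℝ x y)
    (midpoint_mem_segment x y)).trans hseg, i, ⅟2 * c, ?_⟩
  rw [midpoint_sub_left, hxy, smul_smul]

theorem AxisJoined.symm (h : AxisJoined S x y) : AxisJoined S y x :=
  Std.Symm.symm x y h

theorem AxisJoined.mono (hST : S ⊆ T) (h : AxisJoined S x y) : AxisJoined T x y :=
  Relation.ReflTransGen.mono (fun _ _ ↦ AxisStep.mono hST) x y h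

theorem AxisJoined.of_convex_of_box_corners_mem (hS : Convex ℝ S)
    (hcorner : ∀ s : Finset (Fin n),
      x + ∑ i ∈ s, (y i - x i) • EuclideanSpace.single i (1 : ℝ) ∈ S) :
    AxisJoined S x y := by
  have corner_joined (s : Finset (Fin n)) :
      AxisJoined S x (x + ∑ i ∈ s, (y i - x i) • EuclideanSpace.single i (1 : ℝ)) := by
    induction s using Finset.induction_on with
    | empty => simpa only [Finset.sum_empty, add_zero] using Relation.ReflTransGen.refl
    | insert i s his ih =>
      refine ih.tail (.of_convex hS (hcorner s) (hcorner _) (i := i) (c := y i - x i) ?_)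
      rw [Finset.sum_insert his]
      abel
  have corner_univ : x + ∑ i, (y i - x i) • EuclideanSpace.single i (1 : ℝ) = y := by
    ext j
    simp [Pi.single_apply]
  exact corner_univ ▸ corner_joined Finset.univ

theorem eventually_axisJoined (hS : S ∈ 𝓝 x) : ∀ᶠ y in 𝓝 x, AxisJoined S x y := by
  obtain ⟨ε, hε, hball⟩ := Metric.mem_nhds_iff.mp hS
  have corner_mem : ∀ᶠ y in 𝓝 x, ∀ s : Finset (Fin n),
      x + ∑ i ∈ s, (y i - x i) • EuclideanSpace.single i (1 : ℝ) ∈ Metric.ball x ε := by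
    refine Filter.eventually_all.mpr fun s ↦ ?_
    refine ContinuousAt.eventually_mem (by fun_prop) ?_
    simpa only [sub_self, zero_smul, Finset.sum_const_zero, add_zero]
      using Metric.ball_mem_nhds x hε
  filter_upwards [corner_mem] with y hy
  exact (AxisJoined.of_convex_of_box_corners_mem (convex_ball x ε) hy).mono hball

theorem axisJoined_of_isOpen_of_isPreconnected (hopen : IsOpen S) (hconn : IsPreconnected S)
    (hx : x ∈ S) (hy : y ∈ S) : AxisJoined S x y :=
  hconn.induction₂ (AxisJoined S)
    (fun _ hz ↦ (eventually_axisJoined (hopen.mem_nhds hz)).filter_mono nhdsWithin_le_nhds)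
    (fun _ _ _ _ _ _ ↦ .trans) (fun _ _ _ _ ↦ .symm) hx hy

theorem exists_seq_of_reflTransGen {α : Type*} {r : α → α → Prop} {a b : α}
    (h : Relation.ReflTransGen r a b) :
    ∃ (k : ℕ) (x : ℕ → α), x 0 = a ∧ x k = b ∧ ∀ j < k, r (x j) (x (j + 1)) := by
  induction h using Relation.ReflTransGen.head_induction_on with
  | refl => exact ⟨0, fun _ ↦ b, rfl, rfl, fun _ hj ↦ absurd hj (Nat.not_lt_zero _)⟩
  | @head a c hac _ ih =>
    obtain ⟨k, x, rfl, hk, hx⟩ := ih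
    refine ⟨k + 1, fun j ↦ Nat.casesOn j a x, rfl, hk, fun j hj ↦ ?_⟩
    cases j with
    | zero => exact hac
    | succ j => exact hx j (Nat.lt_of_succ_lt_succ hj)

theorem orthoConn_of_forall_axisJoined (o : EuclideanSpace ℝ (Fin n))
    (h : ∀ p ∈ S, AxisJoined S p o) : OrthoConn S :=
  fun p hp q hq ↦ exists_seq_of_reflTransGen ((h p hp).trans (h q hq).symm)

end AxisPaths

section Plane

variable {S : Set (EuclideanSpace ℝ (Fin 2))} {a b p o : EuclideanSpace ℝ (Fin 2)}

theorem exists_axisStep_mem_interior_of_mem_openSegment (hS : Convex ℝ S) (ha : a ∈ S)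
    (hb : b ∈ S) (hab : a ≠ b) (hp : p ∈ openSegment ℝ a b) (hint : (interior S).Nonempty) :
    ∃ q ∈ interior S, AxisStep S p q := by
  obtain ⟨o, ho⟩ := hint
  obtain ⟨α, i, c, hα⟩ := exists_smul_add_eq_smul_single (sub_ne_zero.mpr hab.symm) (o - p)
  have hslide : ∀ᶠ s in 𝓝 (0 : ℝ), p + (s * α) • (b - a) ∈ S := by
    have htend : Filter.Tendsto (fun s : ℝ ↦ s * α) (𝓝 0) (𝓝 0) := by
      simpa only [zero_mul] using (continuous_mul_const α).tendsto 0
    exact (htend.eventually (eventually_add_smul_sub_mem_openSegment hp)).mono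
      fun _ hs ↦ hS.openSegment_subset ha hb hs
  obtain ⟨s, hsS, hs⟩ :=
    ((hslide.filter_mono nhdsWithin_le_nhds).and (self_mem_nhdsWithin (s := Set.Ioi 0))).exists
  rw [mul_smul] at hsS
  obtain ⟨r, hr⟩ := exists_add_smul_mem_interior hS hs hsS ho
  refine ⟨_, hr, .of_convex hS (hS.openSegment_subset ha hb hp) (interior_subset hr)
    (i := i) (c := r * c) ?_⟩
  rw [add_sub_cancel_left, hα, smul_smul]

theorem axisJoined_of_mem_openSegment_of_mem_interior (hS : Convex ℝ S) (ha : a ∈ S)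
    (hb : b ∈ S) (hab : a ≠ b) (hp : p ∈ openSegment ℝ a b) (ho : o ∈ interior S) :
    AxisJoined S p o := by
  obtain ⟨q, hq, hpq⟩ :=
    exists_axisStep_mem_interior_of_mem_openSegment hS ha hb hab hp ⟨o, ho⟩
  have hqo : AxisJoined (interior S) q o :=
    axisJoined_of_isOpen_of_isPreconnected isOpen_interior hS.interior.isPreconnected hq ho
  exact (hqo.mono interior_subset).head hpq

end Plane

theorem convex_polygon_with_axis_segments_orthoConn_general
    {M : Set (EuclideanSpace ℝ (Fin 2))} (hM : Convex ℝ M) (hint : (interior M).Nonempty)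
    (hax : ∀ v ∈ Set.extremePoints ℝ M, ∃ v' ∈ M, v' ≠ v ∧
      ∃ (i : Fin 2) (c : ℝ), v' - v = c • EuclideanSpace.single i 1) :
    OrthoConn M := by
  obtain ⟨o, ho⟩ := hint
  refine orthoConn_of_forall_axisJoined o fun p hp ↦ ?_
  by_cases hext : p ∈ Set.extremePoints ℝ M
  · obtain ⟨v', hv', hne, i, c, hc⟩ := hax p hext
    have hpm : AxisStep M p (midpoint ℝ p v') := (AxisStep.of_convex hM hp hv' hc).midpoint
    exact .head hpm (axisJoined_of_mem_openSegment_of_mem_interior hM hp hv' hne.symm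
      (midpoint_mem_openSegment p v') ho)
  · obtain ⟨a, ha, b, hb, hab, hpab⟩ := exists_mem_openSegment_of_notMem_extremePoints hp hext
    exact axisJoined_of_mem_openSegment_of_mem_interior hM ha hb hab hpab ho

/-- Lemma: a convex polygon admitting an axis-parallel segment at each extreme point is
orthogonally connected. -/
theorem convex_polygon_with_axis_segments_orthoConn
    (V : Finset (EuclideanSpace ℝ (Fin 2))) (M : Set (EuclideanSpace ℝ (Fin 2)))
    (hM : M = convexHull ℝ (V : Set (EuclideanSpace ℝ (Fin 2))))
    (hint : (interior M).Nonempty)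
    (hax : ∀ v ∈ Set.extremePoints ℝ M, ∃ v' ∈ M, v' ≠ v ∧
      ∃ (i : Fin 2) (c : ℝ), v' - v = c • EuclideanSpace.single i 1) :
    OrthoConn M :=
  convex_polygon_with_axis_segments_orthoConn_general (hM ▸ convex_convexHull ℝ _) hint hax
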